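/- Transport of connections and curvature to QD (Proposition 'prop:conn_ex1', abstract form): in the imprimitivity setting below, suppose additionally that δ_X, δ_Y, δ_Z : D → D are additive derivations (δ(d₁d₂) = δ(d₁)d₂ + d₁δ(d₂)) with δ_X∘δ_Y − δ_Y∘δ_X = c·δ_Z, and that ∇_X, ∇_Y, ∇_Z : Ξ → Ξ are additive maps satisfying the Leibniz rule ∇_W(ξ·d) = ∇_W(ξ)·d + ξ·δ_W(d) for each W and all ξ ∈ Ξ, d ∈ D. Set Q = ⟨R,R⟩_R and, for d ∈ D with Q·d = d, define ∇'_W(d) = ⟨R, ∇_W(R·d)⟩_R. Then: (a) ∇'_W(d·Φ) = ∇'_W(d)·Φ + d·δ_W(Φ) for all such d and all Φ ∈ D; and (b) with Θ(X,Y) := ∇_X∇_Y − ∇_Y∇_X − c·∇_Z on Ξ and Θ'(X,Y) := ∇'_X∇'_Y − ∇'_Y∇'_X − c·∇'_Z on QD, one has Θ'(X,Y)(d) = ⟨R, Θ(X,Y)(R)⟩_R·d for every d with Q·d = d (the transported curvature acts by left multiplication by ⟨R, Θ(X,Y)(R)⟩_R). -/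

import Mathlib

/-!
Put `r d = R·d` and `f ξ = ⟨R, ξ⟩_R`. Imprimitivity and `⟨R, R⟩_L·ξ = ξ` give `r ∘ f = id`, so the
transport `T ↦ f ∘ T ∘ r` is multiplicative on additive endomorphisms and carries the curvature `Θ`
of `∇` to that of `∇'`. Since `Θ` satisfies the Leibniz rule along
`δ_X ∘ δ_Y - δ_Y ∘ δ_X - δ_[X,Y] = 0`, it commutes with the right action, and
`Θ' d = f (Θ (R·d)) = f (Θ R) * d`.
-/

section Curvature

variable {A B : Type*} [NonUnitalNonAssocRing A] [NonUnitalNonAssocRing B]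

/-- The curvature `∇_X ∇_Y - ∇_Y ∇_X - ∇_[X,Y]`, as an expression in a ring of operators; the
argument `nXY` stands for `∇_[X,Y]`. -/
def curvature (nX nY nXY : A) : A :=
  nX * nY - nY * nX - nXY

lemma map_curvature (φ : A →ₙ+* B) (nX nY nXY : A) :
    φ (curvature nX nY nXY) = curvature (φ nX) (φ nY) (φ nXY) := by
  simp only [curvature, map_sub, map_mul]

end Curvature

section Connection

variable {D Ξ : Type*} [AddCommGroup D] [AddCommGroup Ξ]

/-- `n` is a covariant derivative along `δ` for the biadditive right action `ρ` of `D` on `Ξ`: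
it satisfies the Leibniz rule `n (ξ·d) = n ξ·d + ξ·δ d`. -/
def IsConnectionAlong (ρ : Ξ →+ D →+ Ξ) (δ : D → D) (n : AddMonoid.End Ξ) : Prop :=
  ∀ ξ d, n (ρ ξ d) = ρ (n ξ) d + ρ ξ (δ d)

namespace IsConnectionAlong

variable {ρ : Ξ →+ D →+ Ξ} {δ δ₁ δ₂ δX δY δXY : D → D} {n n₁ n₂ nX nY nXY : AddMonoid.End Ξ}

lemma sub (h₁ : IsConnectionAlong ρ δ₁ n₁) (h₂ : IsConnectionAlong ρ δ₂ n₂) :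
    IsConnectionAlong ρ (δ₁ - δ₂) (n₁ - n₂) := fun ξ d ↦ by
  change n₁ (ρ ξ d) - n₂ (ρ ξ d) = ρ (n₁ ξ - n₂ ξ) d + ρ ξ (δ₁ d - δ₂ d)
  rw [h₁, h₂, map_sub, map_sub, AddMonoidHom.sub_apply, add_sub_add_comm]

lemma nsmul (c : ℕ) (h : IsConnectionAlong ρ δ n) :
    IsConnectionAlong ρ (c • δ) (c • n) := fun ξ d ↦ by
  change c • n (ρ ξ d) = ρ (c • n ξ) d + ρ ξ (c • δ d)
  rw [h, smul_add, map_nsmul, map_nsmul, AddMonoidHom.nsmul_apply]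

lemma commutator (h₁ : IsConnectionAlong ρ δ₁ n₁) (h₂ : IsConnectionAlong ρ δ₂ n₂) :
    IsConnectionAlong ρ (δ₁ ∘ δ₂ - δ₂ ∘ δ₁) (n₁ * n₂ - n₂ * n₁) := fun ξ d ↦ by
  change n₁ (n₂ (ρ ξ d)) - n₂ (n₁ (ρ ξ d)) =
    ρ (n₁ (n₂ ξ) - n₂ (n₁ ξ)) d + ρ ξ (δ₁ (δ₂ d) - δ₂ (δ₁ d))
  simp only [h₁ _ _, h₂ _ _, map_add, map_sub, AddMonoidHom.sub_apply]
  abel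

lemma curvature_apply_act (hX : IsConnectionAlong ρ δX nX) (hY : IsConnectionAlong ρ δY nY)
    (hXY : IsConnectionAlong ρ δXY nXY) (hδ : δX ∘ δY - δY ∘ δX = δXY) (ξ : Ξ) (d : D) :
    curvature nX nY nXY (ρ ξ d) = ρ (curvature nX nY nXY ξ) d := by
  have leibniz := ((hX.commutator hY).sub hXY) ξ d
  rwa [hδ, sub_self, Pi.zero_apply, map_zero, add_zero] at leibniz

end IsConnectionAlong

end Connection

section Transport

/-- The transport `T ↦ f ∘ T ∘ r` of additive endomorphisms along a section `f` of `r`. It is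
multiplicative because `r ∘ f = id`, but not unital, since `f ∘ r` is only idempotent. -/
def transport {M N : Type*} [AddCommGroup M] [AddCommGroup N] (f : M →+ N) (r : N →+ M)
    (hrf : ∀ m, r (f m) = m) : AddMonoid.End M →ₙ+* AddMonoid.End N where
  toFun T := f.comp (T.comp r)
  map_mul' S T := AddMonoidHom.ext fun n ↦ congrArg (f ∘ S) (hrf (T (r n))).symm
  map_zero' := AddMonoidHom.ext fun _ ↦ map_zero f
  map_add' S T := AddMonoidHom.ext fun n ↦ map_add f (S (r n)) (T (r n))

variable {D Ξ : Type*} [NonUnitalNonAssocRing D] [AddCommGroup Ξ] {ρ : Ξ →+ D →+ Ξ} {R : Ξ}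

lemma map_add_of_act_pairing {f : Ξ → D} (hf : ∀ ξ d, f (ρ ξ d) = f ξ * d)
    (hR : ∀ ξ, ρ R (f ξ) = ξ) (ξ η : Ξ) : f (ξ + η) = f ξ + f η := by
  have self_mul (ζ : Ξ) : f R * f ζ = f ζ := by rw [← hf, hR]
  calc f (ξ + η) = f (ρ R (f ξ + f η)) := by rw [map_add, hR, hR]
    _ = f ξ + f η := by rw [hf, mul_add, self_mul, self_mul]

lemma IsConnectionAlong.pairing_apply_act_mul {f : Ξ →+ D} {δ : D → D} {n : AddMonoid.End Ξ}
    (hn : IsConnectionAlong ρ δ n) (hρ : ∀ ξ d e, ρ ξ (d * e) = ρ (ρ ξ d) e)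
    (hf : ∀ ξ d, f (ρ ξ d) = f ξ * d) {d : D} (hd : f R * d = d) (Φ : D) :
    f (n (ρ R (d * Φ))) = f (n (ρ R d)) * Φ + d * δ Φ :=
  calc f (n (ρ R (d * Φ))) = f (ρ (n (ρ R d)) Φ + ρ (ρ R d) (δ Φ)) := by rw [hρ, hn]
    _ = f (n (ρ R d)) * Φ + d * δ Φ := by rw [map_add, hf, hf, hf, hd]

lemma curvature_transport_apply {f : Ξ →+ D} (hf : ∀ ξ d, f (ρ ξ d) = f ξ * d)
    (hR : ∀ ξ, ρ R (f ξ) = ξ) {δX δY δXY : D → D} {nX nY nXY : AddMonoid.End Ξ}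
    (hX : IsConnectionAlong ρ δX nX) (hY : IsConnectionAlong ρ δY nY)
    (hXY : IsConnectionAlong ρ δXY nXY) (hδ : δX ∘ δY - δY ∘ δX = δXY) (d : D) :
    curvature (transport f (ρ R) hR nX) (transport f (ρ R) hR nY) (transport f (ρ R) hR nXY) d =
      f (curvature nX nY nXY R) * d :=
  calc _ = transport f (ρ R) hR (curvature nX nY nXY) d := by rw [map_curvature]
    _ = f (curvature nX nY nXY (ρ R d)) := rfl
    _ = f (curvature nX nY nXY R) * d := by rw [hX.curvature_apply_act hY hXY hδ, hf]

end Transport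

theorem statement18_general (c : ℕ) {D Ξ : Type*} [NonUnitalNonAssocRing D] [AddCommGroup Ξ]
    (ρ : Ξ →+ D →+ Ξ) (hρ : ∀ ξ d e, ρ ξ (d * e) = ρ (ρ ξ d) e)
    (f : Ξ → D) (hf : ∀ ξ d, f (ρ ξ d) = f ξ * d) (R : Ξ) (hR : ∀ ξ, ρ R (f ξ) = ξ)
    (δX δY δZ : D → D) (hδ : ∀ d, δX (δY d) - δY (δX d) = c • δZ d)
    (nX nY nZ : AddMonoid.End Ξ) (hX : IsConnectionAlong ρ δX nX)
    (hY : IsConnectionAlong ρ δY nY) (hZ : IsConnectionAlong ρ δZ nZ) :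
    (∀ d Φ, f R * d = d →
      f (nX (ρ R (d * Φ))) = f (nX (ρ R d)) * Φ + d * δX Φ ∧
      f (nY (ρ R (d * Φ))) = f (nY (ρ R d)) * Φ + d * δY Φ ∧
      f (nZ (ρ R (d * Φ))) = f (nZ (ρ R d)) * Φ + d * δZ Φ) ∧
    ∀ d, f (nX (ρ R (f (nY (ρ R d))))) - f (nY (ρ R (f (nX (ρ R d))))) - c • f (nZ (ρ R d)) =
      f (nX (nY R) - nY (nX R) - c • nZ R) * d := by
  let F : Ξ →+ D := AddMonoidHom.mk' f (map_add_of_act_pairing hf hR)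
  have hF : ∀ ξ d, F (ρ ξ d) = F ξ * d := hf
  refine ⟨fun d Φ hd ↦ ⟨?_, ?_, ?_⟩, fun d ↦ ?_⟩
  · exact hX.pairing_apply_act_mul hρ hF hd Φ
  · exact hY.pairing_apply_act_mul hρ hF hd Φ
  · exact hZ.pairing_apply_act_mul hρ hF hd Φ
  · have curvature_eq := curvature_transport_apply hF hR hX hY (hZ.nsmul c) (funext hδ) d
    rwa [map_nsmul] at curvature_eq

/-- Proposition `prop:conn_ex1`, abstract form: in the imprimitivity
setting, given derivations `δ_X, δ_Y, δ_Z` of `D` with `δ_X∘δ_Y − δ_Y∘δ_X = c·δ_Z` and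
additive maps `∇_X, ∇_Y, ∇_Z : Ξ → Ξ` satisfying the Leibniz rule, the transported maps
`∇'_W(d) = ⟨R, ∇_W(R·d)⟩_R` on `QD` (`Q = ⟨R,R⟩_R`) satisfy (a) the Leibniz rule, and (b) the
transported curvature acts by left multiplication by `⟨R, Θ(X,Y)(R)⟩_R`, where
`Θ(X,Y) = ∇_X∇_Y − ∇_Y∇_X − c·∇_Z`. -/
theorem statement18 (c : ℕ) (hc : 0 < c)
    {D E Ξ : Type*}
    [Ring D] [Algebra ℂ D] [StarRing D] [StarModule ℂ D]
    [Ring E] [Algebra ℂ E] [StarRing E] [StarModule ℂ E]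
    [AddCommGroup Ξ] [Module ℂ Ξ]
    -- the left `E`-action, the right `D`-action, and the two inner products on `Ξ`
    (aL : E → Ξ → Ξ) (aR : Ξ → D → Ξ) (ipR : Ξ → Ξ → D) (ipL : Ξ → Ξ → E)
    -- `Ξ` is a left `E`-module
    (haL_add : ∀ (a : E) (ξ η : Ξ), aL a (ξ + η) = aL a ξ + aL a η)
    (haL_add' : ∀ (a b : E) (ξ : Ξ), aL (a + b) ξ = aL a ξ + aL b ξ)
    (haL_mul : ∀ (a b : E) (ξ : Ξ), aL (a * b) ξ = aL a (aL b ξ))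
    -- `Ξ` is a right `D`-module
    (haR_add : ∀ (ξ η : Ξ) (d : D), aR (ξ + η) d = aR ξ d + aR η d)
    (haR_add' : ∀ (ξ : Ξ) (d₁ d₂ : D), aR ξ (d₁ + d₂) = aR ξ d₁ + aR ξ d₂)
    (haR_mul : ∀ (ξ : Ξ) (d₁ d₂ : D), aR ξ (d₁ * d₂) = aR (aR ξ d₁) d₂)
    -- the actions commute
    (hcomm : ∀ (a : E) (ξ : Ξ) (d : D), aR (aL a ξ) d = aL a (aR ξ d))
    -- `⟨ξ, η·d⟩_R = ⟨ξ,η⟩_R·d` and `(⟨ξ,η⟩_R)* = ⟨η,ξ⟩_R`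
    (hipR_act : ∀ (ξ η : Ξ) (d : D), ipR ξ (aR η d) = ipR ξ η * d)
    (hipR_star : ∀ ξ η : Ξ, star (ipR ξ η) = ipR η ξ)
    -- the imprimitivity relation `⟨ξ,η⟩_L·ζ = ξ·⟨η,ζ⟩_R`
    (himp : ∀ ξ η ζ : Ξ, aL (ipL ξ η) ζ = aR ξ (ipR η ζ))
    -- `R ∈ Ξ` with `⟨R,R⟩_L·ξ = ξ`
    (R : Ξ) (hR : ∀ ξ : Ξ, aL (ipL R R) ξ = ξ)
    -- additive derivations `δ_X, δ_Y, δ_Z` on `D` with `δ_X∘δ_Y − δ_Y∘δ_X = c·δ_Z`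
    (δX δY δZ : D → D)
    (hδXadd : ∀ d₁ d₂ : D, δX (d₁ + d₂) = δX d₁ + δX d₂)
    (hδYadd : ∀ d₁ d₂ : D, δY (d₁ + d₂) = δY d₁ + δY d₂)
    (hδZadd : ∀ d₁ d₂ : D, δZ (d₁ + d₂) = δZ d₁ + δZ d₂)
    (hδXmul : ∀ d₁ d₂ : D, δX (d₁ * d₂) = δX d₁ * d₂ + d₁ * δX d₂)
    (hδYmul : ∀ d₁ d₂ : D, δY (d₁ * d₂) = δY d₁ * d₂ + d₁ * δY d₂)
    (hδZmul : ∀ d₁ d₂ : D, δZ (d₁ * d₂) = δZ d₁ * d₂ + d₁ * δZ d₂)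
    (hδbr : ∀ d : D, δX (δY d) - δY (δX d) = c • δZ d)
    -- additive maps `∇_X, ∇_Y, ∇_Z : Ξ → Ξ` satisfying the Leibniz rule
    (nX nY nZ : Ξ → Ξ)
    (hnXadd : ∀ ξ η : Ξ, nX (ξ + η) = nX ξ + nX η)
    (hnYadd : ∀ ξ η : Ξ, nY (ξ + η) = nY ξ + nY η)
    (hnZadd : ∀ ξ η : Ξ, nZ (ξ + η) = nZ ξ + nZ η)
    (hnX : ∀ (ξ : Ξ) (d : D), nX (aR ξ d) = aR (nX ξ) d + aR ξ (δX d))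
    (hnY : ∀ (ξ : Ξ) (d : D), nY (aR ξ d) = aR (nY ξ) d + aR ξ (δY d))
    (hnZ : ∀ (ξ : Ξ) (d : D), nZ (aR ξ d) = aR (nZ ξ) d + aR ξ (δZ d)) :
    -- (a) the transported maps `∇'_W(d) = ⟨R, ∇_W(R·d)⟩_R` satisfy the Leibniz rule on `QD`
    (∀ (d Φ : D), ipR R R * d = d →
      (ipR R (nX (aR R (d * Φ))) = ipR R (nX (aR R d)) * Φ + d * δX Φ) ∧
      (ipR R (nY (aR R (d * Φ))) = ipR R (nY (aR R d)) * Φ + d * δY Φ) ∧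
      (ipR R (nZ (aR R (d * Φ))) = ipR R (nZ (aR R d)) * Φ + d * δZ Φ)) ∧
    -- (b) the transported curvature acts by left multiplication by `⟨R, Θ(X,Y)(R)⟩_R`
    (∀ d : D, ipR R R * d = d →
      ipR R (nX (aR R (ipR R (nY (aR R d))))) - ipR R (nY (aR R (ipR R (nX (aR R d)))))
          - c • ipR R (nZ (aR R d))
        = ipR R (nX (nY R) - nY (nX R) - c • nZ R) * d) := by
  exact (statement18_general c
    (AddMonoidHom.mk' (fun ξ ↦ AddMonoidHom.mk' (aR ξ) (haR_add' ξ))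
      fun ξ η ↦ AddMonoidHom.ext (haR_add ξ η))
    haR_mul (ipR R) (hipR_act R) R (fun ξ ↦ (himp R R ξ).symm.trans (hR ξ)) δX δY δZ hδbr
    (AddMonoidHom.mk' nX hnXadd) (AddMonoidHom.mk' nY hnYadd) (AddMonoidHom.mk' nZ hnZadd)
    hnX hnY hnZ).imp_right fun curvature_eq d _ ↦ curvature_eq d
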